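/- For a prime power q = 2^k, the graph G(q², q+1) has exactly (q⁵ − q⁴ + q³ − 2q²)/2 edges. -/

import Mathlib

/-- The scaling relation by the subgroup `H ≤ Fˣ` on nonzero pairs of field elements:
`(a₁,b₁) ∼ (a₂,b₂)` iff there is `h ∈ H` with `a₁ = h·a₂` and `b₁ = h·b₂`. -/
def Grel {F : Type} [Field F] (H : Subgroup Fˣ) (p p' : {p : F × F // p ≠ 0}) : Prop :=
  ∃ h ∈ H, p.1.1 = (h : F) * p'.1.1 ∧ p.1.2 = (h : F) * p'.1.2

/-- The vertex set of the graph `G(q,t)`: nonzero pairs modulo scaling by `H`. -/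
def GVertex (F : Type) [Field F] (H : Subgroup Fˣ) : Type :=
  Quot (Grel H)

/-- Membership of a field element in the subgroup `H ≤ Fˣ`. -/
def memH {F : Type} [Field F] (H : Subgroup Fˣ) (x : F) : Prop :=
  ∃ h ∈ H, (h : F) = x

/-- Adjacency in the graph `G(q,t)`: `⟨a,b⟩` and `⟨x,y⟩` are adjacent iff `a·x + b·y ∈ H`
(this condition is independent of the chosen representatives). -/
def GAdj {F : Type} [Field F] (H : Subgroup Fˣ) (u v : GVertex F H) : Prop :=
  ∃ p p' : {p : F × F // p ≠ 0},
    u = Quot.mk (Grel H) p ∧ v = Quot.mk (Grel H) p' ∧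
      memH H (p.1.1 * p'.1.1 + p.1.2 * p'.1.2)

/-- The edge set of the graph `G(q,t)`: unordered pairs of distinct adjacent vertices. -/
def GEdges (F : Type) [Field F] (H : Subgroup Fˣ) : Set (Sym2 (GVertex F H)) :=
  {e | ∃ u v : GVertex F H, e = s(u, v) ∧ u ≠ v ∧ GAdj H u v}

open Classical in
noncomputable instance gvFintype {F : Type} [Field F] [Fintype F] (H : Subgroup Fˣ) :
    Fintype (GVertex F H) :=
  Fintype.ofSurjective (Quot.mk (Grel H)) Quot.mk_surjective

theorem Grel_equiv {F : Type} [Field F] (H : Subgroup Fˣ) : Equivalence (Grel H) := by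
  refine ⟨fun p => ⟨1, H.one_mem, by simp, by simp⟩, ?_, ?_⟩
  · rintro p p' ⟨h, hh, h1, h2⟩
    exact ⟨h⁻¹, H.inv_mem hh, by rw [h1]; simp, by rw [h2]; simp⟩
  · rintro p p' p'' ⟨h, hh, h1, h2⟩ ⟨g, hg, g1, g2⟩
    exact ⟨h * g, H.mul_mem hh hg, by rw [h1, g1]; push_cast; ring,
      by rw [h2, g2]; push_cast; ring⟩

theorem mk_eq_iff {F : Type} [Field F] (H : Subgroup Fˣ) (p p' : {p : F × F // p ≠ 0}) :
    Quot.mk (Grel H) p = Quot.mk (Grel H) p' ↔ Grel H p p' := by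
  rw [Quot.eq, (Grel_equiv H).eqvGen_iff]

theorem memH_mul {F : Type} [Field F] {H : Subgroup Fˣ} {h : Fˣ} (hh : h ∈ H) {x : F}
    (hx : memH H x) : memH H ((h : F) * x) := by
  obtain ⟨g, hg, rfl⟩ := hx
  exact ⟨h * g, H.mul_mem hh hg, by simp⟩

theorem GAdj_mk {F : Type} [Field F] (H : Subgroup Fˣ) (p p' : {p : F × F // p ≠ 0}) :
    GAdj H (Quot.mk _ p) (Quot.mk _ p') ↔ memH H (p.1.1 * p'.1.1 + p.1.2 * p'.1.2) := by
  constructor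
  · rintro ⟨r, r', h1, h2, hm⟩
    obtain ⟨h, hh, e1, e2⟩ := (mk_eq_iff H _ _).1 h1
    obtain ⟨g, hg, f1, f2⟩ := (mk_eq_iff H _ _).1 h2
    have := memH_mul (H.mul_mem hh hg) hm
    rw [e1, e2, f1, f2]
    convert this using 1
    push_cast
    ring
  · intro h
    exact ⟨p, p', rfl, rfl, h⟩

/-- scaling a nonzero pair -/
def scaleP {F : Type} [Field F] (h : Fˣ) (p : {p : F × F // p ≠ 0}) : {p : F × F // p ≠ 0} :=
  ⟨((h : F) * p.1.1, (h : F) * p.1.2), by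
    intro h0
    apply p.2
    have h1 := congrArg Prod.fst h0
    have h2 := congrArg Prod.snd h0
    simp at h1 h2
    exact Prod.ext h1 h2⟩

theorem mk_scaleP {F : Type} [Field F] {H : Subgroup Fˣ} {h : Fˣ} (hh : h ∈ H)
    (p : {p : F × F // p ≠ 0}) : Quot.mk (Grel H) (scaleP h p) = Quot.mk (Grel H) p :=
  (mk_eq_iff H _ _).2 ⟨h, hh, rfl, rfl⟩

theorem scaleP_inj {F : Type} [Field F] {h g : Fˣ} {p : {p : F × F // p ≠ 0}}
    (e : scaleP h p = scaleP g p) : h = g := by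
  have e1 := congrArg (fun r => r.1.1) e
  have e2 := congrArg (fun r => r.1.2) e
  simp only [scaleP] at e1 e2
  by_cases h1 : p.1.1 = 0
  · have h2 : p.1.2 ≠ 0 := fun h2 => p.2 (Prod.ext h1 h2)
    exact Units.ext (mul_right_cancel₀ h2 e2)
  · exact Units.ext (mul_right_cancel₀ h1 e1)

theorem card_fiber {F : Type} [Field F] [Fintype F] (H : Subgroup Fˣ)
    (S : GVertex F H → Prop) :
    Nat.card {p : {p : F × F // p ≠ 0} // S (Quot.mk (Grel H) p)} =
      Nat.card {v // S v} * Nat.card H := by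
  rw [← Nat.card_prod]
  symm
  refine Nat.card_congr (Equiv.ofBijective
    (fun x => ⟨scaleP (x.2 : Fˣ) (Quot.out x.1.1), ?_⟩) ⟨?_, ?_⟩)
  · rw [mk_scaleP x.2.2]
    have : Quot.mk (Grel H) (Quot.out x.1.1) = x.1.1 := Quot.out_eq x.1.1
    rw [this]
    exact x.1.2
  · rintro ⟨⟨v, hv⟩, ⟨h, hh⟩⟩ ⟨⟨w, hw⟩, ⟨g, hg⟩⟩ e
    have e' : scaleP h (Quot.out v) = scaleP g (Quot.out w) := congrArg Subtype.val e
    have e2 := congrArg (Quot.mk (Grel H)) e'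
    rw [mk_scaleP hh, mk_scaleP hg] at e2
    have e3 : v = w := (Quot.out_eq v).symm.trans (e2.trans (Quot.out_eq w))
    subst e3
    have := scaleP_inj e'
    subst this
    rfl
  · rintro ⟨p, hp⟩
    obtain ⟨h, hh, e1, e2⟩ := (mk_eq_iff H p (Quot.out (Quot.mk (Grel H) p))).1
      (Quot.out_eq (Quot.mk (Grel H) p)).symm
    exact ⟨⟨⟨Quot.mk _ p, hp⟩, ⟨h, hh⟩⟩, Subtype.ext (Subtype.ext (Prod.ext e1.symm e2.symm))⟩

theorem memH_ne {F : Type} [Field F] {H : Subgroup Fˣ} {x : F} (hx : memH H x) : x ≠ 0 := by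
  obtain ⟨g, hg, rfl⟩ := hx
  exact g.ne_zero

theorem card_lin1 {F : Type} [Field F] [Fintype F] (H : Subgroup Fˣ) (a b : F) (ha : a ≠ 0) :
    Nat.card {p : {p : F × F // p ≠ 0} // memH H (a * p.1.1 + b * p.1.2)} =
      Nat.card H * Nat.card F := by
  rw [← Nat.card_prod]
  symm
  have key : ∀ x : H × F, a * ((((x.1 : Fˣ) : F) - b * x.2) / a) + b * x.2 = ((x.1 : Fˣ) : F) := by
    intro x
    field_simp
    ring
  refine Nat.card_congr (Equiv.ofBijective
    (fun x => ⟨⟨((((x.1 : Fˣ) : F) - b * x.2) / a, x.2), ?_⟩, ?_⟩) ⟨?_, ?_⟩)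
  · intro h0
    have h1 := congrArg Prod.fst h0
    have h2 := congrArg Prod.snd h0
    have := key x
    simp only [Prod.fst_zero, Prod.snd_zero] at h1 h2
    rw [h1, h2] at this
    simp at this
    exact (x.1 : Fˣ).ne_zero this.symm
  · simp only [key x]
    exact ⟨x.1, x.1.2, rfl⟩
  · intro x y e
    have e0 := congrArg (fun r => r.1.1) e
    have e1 := congrArg Prod.fst e0
    have e2 := congrArg Prod.snd e0
    simp only at e1 e2
    have kx := key x
    rw [e1, e2, key y] at kx
    exact Prod.ext (Subtype.ext (Units.ext kx.symm)) e2
  · rintro ⟨⟨⟨x, y⟩, hp⟩, ⟨h, hh, e⟩⟩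
    refine ⟨⟨⟨h, hh⟩, y⟩, Subtype.ext (Subtype.ext (Prod.ext ?_ rfl))⟩
    simp only at e ⊢
    rw [e]
    field_simp
    ring

theorem card_lin {F : Type} [Field F] [Fintype F] (H : Subgroup Fˣ)
    (r : {p : F × F // p ≠ 0}) :
    Nat.card {p : {p : F × F // p ≠ 0} // memH H (r.1.1 * p.1.1 + r.1.2 * p.1.2)} =
      Nat.card H * Nat.card F := by
  by_cases h1 : r.1.1 = 0
  · have h2 : r.1.2 ≠ 0 := fun h2 => r.2 (Prod.ext h1 h2)
    rw [← card_lin1 H r.1.2 r.1.1 h2]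
    have sw : ∀ p : {p : F × F // p ≠ 0}, p.1.swap ≠ 0 := by
      intro p h0
      exact p.2 (Prod.ext (congrArg Prod.snd h0) (congrArg Prod.fst h0))
    let E : {p : F × F // p ≠ 0} ≃ {p : F × F // p ≠ 0} :=
      ⟨fun p => ⟨p.1.swap, sw p⟩, fun p => ⟨p.1.swap, sw p⟩, fun p => rfl, fun p => rfl⟩
    refine Nat.card_congr (E.subtypeEquiv ?_)
    intro p
    simp [E, add_comm]
  · exact card_lin1 H _ _ h1

theorem memH_sq {F : Type} [Field F] [Fintype F] (H : Subgroup Fˣ)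
    (he : Even (Fintype.card F)) (x : F) : memH H (x ^ 2) ↔ memH H x := by
  constructor
  · rintro ⟨h, hh, e⟩
    obtain ⟨m, hm⟩ := he
    refine ⟨h ^ m, H.pow_mem hh m, ?_⟩
    push_cast
    rw [e, ← pow_mul, two_mul, ← hm, FiniteField.pow_card]
  · rintro ⟨h, hh, rfl⟩
    exact ⟨h ^ 2, H.pow_mem hh 2, by simp⟩

theorem card_nbr {F : Type} [Field F] [Fintype F] (H : Subgroup Fˣ) (u : GVertex F H) :
    Nat.card {v // GAdj H u v} = Nat.card F := by
  obtain ⟨r, rfl⟩ := Quot.mk_surjective u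
  have h1 := card_fiber H (fun v => GAdj H (Quot.mk _ r) v)
  simp only [GAdj_mk] at h1
  rw [card_lin, mul_comm] at h1
  exact (Nat.eq_of_mul_eq_mul_right Nat.card_pos h1).symm

theorem card_loops {F : Type} [Field F] [Fintype F] (H : Subgroup Fˣ)
    (he : Even (Fintype.card F)) (h2 : (2 : F) = 0) :
    Nat.card {v // GAdj H v v} = Nat.card F := by
  have h1 := card_fiber H (fun v => GAdj H v v)
  simp only [GAdj_mk] at h1
  have h3 := card_lin H (⟨(1, 1), by simp⟩ : {p : F × F // p ≠ 0})
  have h4 : ∀ p : {p : F × F // p ≠ 0}, memH H (p.1.1 * p.1.1 + p.1.2 * p.1.2) ↔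
      memH H ((1 : F) * p.1.1 + 1 * p.1.2) := by
    intro p
    rw [← memH_sq H he ((1 : F) * p.1.1 + 1 * p.1.2)]
    have : p.1.1 * p.1.1 + p.1.2 * p.1.2 = ((1 : F) * p.1.1 + 1 * p.1.2) ^ 2 := by
      linear_combination (-p.1.1 * p.1.2) * h2
    rw [this]
  simp only [h4] at h1
  rw [h3, mul_comm] at h1
  exact (Nat.eq_of_mul_eq_mul_right Nat.card_pos h1).symm

/-- the graph as a simple graph -/
def GGraph {F : Type} [Field F] (H : Subgroup Fˣ) : SimpleGraph (GVertex F H) where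
  Adj u v := u ≠ v ∧ GAdj H u v
  symm := ⟨by
    rintro u v ⟨hne, p, p', h1, h2, h3⟩
    exact ⟨hne.symm, p', p, h2, h1, by simpa [mul_comm] using h3⟩⟩
  loopless := ⟨fun u h => h.1 rfl⟩

theorem edges_eq {F : Type} [Field F] (H : Subgroup Fˣ) : GEdges F H = (GGraph H).edgeSet := by
  ext e
  induction e using Sym2.ind with
  | _ u v =>
    rw [SimpleGraph.mem_edgeSet]
    constructor
    · rintro ⟨a, b, hab, h⟩
      have : (GGraph H).Adj a b := h
      rwa [← SimpleGraph.mem_edgeSet, ← hab, SimpleGraph.mem_edgeSet] at this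
    · intro h
      exact ⟨u, v, rfl, h⟩

open Classical in
theorem degree_eq {F : Type} [Field F] [Fintype F] (H : Subgroup Fˣ) (u : GVertex F H) :
    (GGraph H).degree u + (if GAdj H u u then 1 else 0) = Nat.card F := by
  rw [← card_nbr H u, Nat.card_eq_fintype_card, Fintype.card_subtype,
    ← SimpleGraph.card_neighborFinset_eq_degree]
  have hn : (GGraph H).neighborFinset u = (Finset.univ.filter (fun v => GAdj H u v)).erase u := by
    ext v
    rw [SimpleGraph.mem_neighborFinset, Finset.mem_erase, Finset.mem_filter]
    exact ⟨fun h => ⟨h.1.symm, Finset.mem_univ _, h.2⟩, fun h => ⟨h.1.symm, h.2.2⟩⟩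
  rw [hn]
  split_ifs with h
  · exact Finset.card_erase_add_one (by simpa using h)
  · rw [Finset.erase_eq_of_notMem (by simpa using h), add_zero]

theorem GEdges_card_even {q : ℕ} (hq : IsPrimePow q) (h2 : ∃ k, q = 2 ^ k)
    {F : Type} [Field F] [Fintype F] (hF : Fintype.card F = q ^ 2)
    (H : Subgroup Fˣ) (hH : Nat.card H = q + 1) :
    2 * ((GEdges F H).ncard : ℤ) =
      (q : ℤ) ^ 5 - (q : ℤ) ^ 4 + (q : ℤ) ^ 3 - 2 * (q : ℤ) ^ 2 := by
  classical
  have hFn : Nat.card F = q ^ 2 := by rw [Nat.card_eq_fintype_card, hF]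
  obtain ⟨k, hk⟩ := h2
  have hk0 : k ≠ 0 := by
    rintro rfl
    exact hq.ne_one (by simpa using hk)
  have hqe : Even q := by
    rw [hk]
    exact (even_two).pow_of_ne_zero hk0
  have he : Even (Fintype.card F) := by
    rw [hF]
    exact hqe.pow_of_ne_zero two_ne_zero
  have h20 : (2 : F) = 0 := by
    have h := FiniteField.cast_card_eq_zero F
    rw [hF, hk] at h
    push_cast at h
    exact pow_eq_zero_iff hk0 |>.1 (pow_eq_zero_iff two_ne_zero |>.1 h)
  have hL := card_loops H he h20
  have hV : ((q : ℤ) ^ 4 - 1) = (Fintype.card (GVertex F H) : ℤ) * (q + 1) := by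
    have h1 := card_fiber H (fun _ => True)
    have h3 : Nat.card {v : GVertex F H // True} = Fintype.card (GVertex F H) := by
      rw [Nat.card_congr (Equiv.subtypeUnivEquiv (fun _ => trivial)), Nat.card_eq_fintype_card]
    rw [h3, hH, Nat.card_congr (Equiv.subtypeUnivEquiv (fun _ => trivial)),
      Nat.card_eq_fintype_card] at h1
    have h4 : Fintype.card {p : F × F // p ≠ 0} + 1 = q ^ 4 := by
      have := Fintype.card_subtype_compl (fun p : F × F => p = 0)
      have h5 : 0 < Fintype.card (F × F) := Fintype.card_pos
      simp only [Fintype.card_subtype_eq] at this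
      have h6 : Fintype.card (F × F) = q ^ 4 := by
        rw [Fintype.card_prod, hF]; ring
      have h7 : Fintype.card {p : F × F // p ≠ 0} = Fintype.card (F × F) - 1 := by
        rw [← this]
      omega
    have h8 : ((Fintype.card {p : F × F // p ≠ 0} : ℤ)) + 1 = (q : ℤ) ^ 4 := by exact_mod_cast h4
    rw [← h8, h1]
    push_cast
    ring
  have hV' : (Fintype.card (GVertex F H) : ℤ) = (q ^ 2 + 1) * (q - 1) := by
    have hq1 : (q : ℤ) + 1 ≠ 0 := by positivity
    apply mul_right_cancel₀ hq1
    rw [← hV]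
    ring
  have hs := (GGraph H).sum_degrees_eq_twice_card_edges
  have hd : ∑ u : GVertex F H, ((GGraph H).degree u + (if GAdj H u u then 1 else 0)) =
      Fintype.card (GVertex F H) * q ^ 2 := by
    rw [Finset.sum_congr rfl (fun u _ => degree_eq H u)]
    simp
    left
    rw [hF]
  rw [Finset.sum_add_distrib, hs, Finset.sum_boole] at hd
  rw [Nat.card_eq_fintype_card, Fintype.card_subtype, hFn] at hL
  rw [hL] at hd
  have hE : (GEdges F H).ncard = (GGraph H).edgeFinset.card := by
    rw [edges_eq, ← SimpleGraph.coe_edgeFinset, Set.ncard_coe_finset]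
  rw [hE]
  have hd' : 2 * ((GGraph H).edgeFinset.card : ℤ) + (q : ℤ) ^ 2 =
      (Fintype.card (GVertex F H) : ℤ) * q ^ 2 := by exact_mod_cast hd
  rw [hV'] at hd'
  linear_combination hd'
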